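/- There exist a constant C > 0 and an integer K_0, depending only on p_L, p_U, and the length of X, such that under the bin construction with K ≥ K_0 the following holds: for every L-Lipschitz function g : X → ℝ, setting δ_k = (∫_X ℓ_k g dμ)/(∫_X ℓ_k dμ) and f_E(x) = ∑_{k=1}^K δ_k ℓ_k(x), one has sup_{x∈X} |g(x) − f_E(x)| ≤ C·L/K. -/

import Mathlib

/-! The bin functions are differences of consecutive soft steps, so they are nonnegative and sum
to `1`; hence `|g x - f_E x| ≤ ∑ ℓ_k(x) |g x - δ_k|`, and `δ_k` is a weighted mean of `g` with
weight `ℓ_k`. By the Lipschitz bound it suffices to control the `ℓ_k`-mean of `|x - y|`, and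
`|x - y| ≤ h_k + d_k(x) + d_k(y)`, where `h_k` is the width of the `k`-th bin clipped to
`X = [a, b]` and `d_k` the distance to it (`abs_sub_le_gap`).

* `h_k ≤ 1 / (pL K)` because the bin has mass `1 / K` (`bin_mass_bounds`).
* `ℓ_k d_k ≤ γ` pointwise, since `ℓ_k ≤ exp (-d_k / γ)` (`ell_mul_gap_le`).
* `∫ ℓ_k ≥ 1 / (6 K)`, since the bin has width at least `1 / (pU K) ≥ 2 γ` once `K ≥ 2 pU`, and
  then `ℓ_k ≥ 1 / 6` on all of it (`ell_lower`).

Thus `ℓ_k(x) |g x - δ_k| ≤ L (ℓ_k(x) h_k + γ + 6 K γ ℓ_k(x))` (`weighted_mean_error`), and summing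
over `k` gives `L (1 / (pL K) + 7 K γ)`, where `K γ = 1 / K² ≤ 1 / K`.
-/

open MeasureTheory

/-- The sigmoid function σ(t) = 1/(1+exp(−t)). -/
noncomputable def sigmoid (t : ℝ) : ℝ := 1 / (1 + Real.exp (-t))

/-- The bin functions ℓ_{k,K}. -/
noncomputable def ell (χ : ℕ → ℝ) (γ : ℝ) (T k : ℕ) (x : ℝ) : ℝ :=
  if k = 1 then 1 - sigmoid ((x - χ 1) / γ)
  else if k = T then sigmoid ((x - χ (T - 1)) / γ)
  else sigmoid ((x - χ (k - 1)) / γ) - sigmoid ((x - χ k) / γ)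

/-! ### The sigmoid -/

lemma sigmoid_le_exp (t : ℝ) : sigmoid t ≤ Real.exp t := by
  unfold sigmoid
  rw [div_le_iff₀ (by positivity), mul_add, ← Real.exp_add]
  simp [Real.exp_nonneg]

lemma sigmoid_neg_eq (t : ℝ) : sigmoid (-t) = 1 - sigmoid t := by
  unfold sigmoid
  have h : Real.exp (-t) * Real.exp t = 1 := by rw [← Real.exp_add]; simp
  have h1 := Real.exp_pos t
  have h2 := Real.exp_pos (-t)
  rw [neg_neg]
  field_simp
  linarith

lemma sigmoid_mono {s t : ℝ} (h : s ≤ t) : sigmoid s ≤ sigmoid t := by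
  unfold sigmoid
  have := Real.exp_pos (-t)
  gcongr

lemma sigmoid_nonneg' (t : ℝ) : 0 ≤ sigmoid t := by
  unfold sigmoid; positivity

lemma half_le_sigmoid {t : ℝ} (h : 0 ≤ t) : 1 / 2 ≤ sigmoid t := by
  refine le_trans ?_ (sigmoid_mono h)
  norm_num [sigmoid]

lemma two_thirds_le_sigmoid {t : ℝ} (h : 1 ≤ t) : 2 / 3 ≤ sigmoid t := by
  refine le_trans ?_ (sigmoid_mono h)
  unfold sigmoid
  have h2 : (2 : ℝ) ≤ Real.exp 1 := by linarith [Real.add_one_le_exp (1 : ℝ)]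
  have h3 : Real.exp (-1) ≤ 1 / 2 := by
    rw [Real.exp_neg, inv_eq_one_div]
    gcongr
  have h4 := Real.exp_pos (-1)
  rw [le_div_iff₀ (by linarith)]
  linarith

lemma continuous_sigmoid' : Continuous sigmoid := by
  unfold sigmoid
  refine Continuous.div continuous_const (by fun_prop) (fun t => ?_)
  have := Real.exp_pos (-t)
  linarith

/-! ### The bin functions -/

/-- The soft step at the `j`-th breakpoint, with the conventions that the step at `0` is
constantly `1` and the step at `K` is constantly `0`; the bin functions are the differences of
consecutive soft steps. -/
noncomputable def softStep (χ : ℕ → ℝ) (γ : ℝ) (K j : ℕ) (x : ℝ) : ℝ :=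
  if j = 0 then 1 else if j = K then 0 else sigmoid ((x - χ j) / γ)

lemma ell_eq_softStep {χ : ℕ → ℝ} {γ : ℝ} {K k : ℕ} (hK : 2 ≤ K) (h1 : 1 ≤ k) (hk : k ≤ K)
    (x : ℝ) : ell χ γ K k x = softStep χ γ K (k - 1) x - softStep χ γ K k x := by
  unfold ell softStep
  by_cases e1 : k = 1
  · subst e1
    simp [show ¬ (1 = K) by omega]
  · by_cases e2 : k = K
    · subst e2
      simp [e1, show ¬ (k - 1 = 0) by omega, show ¬ (k - 1 = k) by omega,
        show ¬ (k = 0) by omega]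
    · simp [e1, e2, show ¬ (k - 1 = 0) by omega, show ¬ (k - 1 = K) by omega,
        show ¬ (k = 0) by omega]

lemma softStep_nonneg (χ : ℕ → ℝ) (γ : ℝ) (K j : ℕ) (x : ℝ) : 0 ≤ softStep χ γ K j x := by
  unfold softStep
  split_ifs
  · exact zero_le_one
  · exact le_rfl
  · exact sigmoid_nonneg' _

lemma softStep_le_one (χ : ℕ → ℝ) (γ : ℝ) (K j : ℕ) (x : ℝ) : softStep χ γ K j x ≤ 1 := by
  unfold softStep
  have h1 := sigmoid_neg_eq ((x - χ j) / γ)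
  have h2 := sigmoid_nonneg' (-((x - χ j) / γ))
  split_ifs <;> linarith

lemma continuous_softStep (χ : ℕ → ℝ) (γ : ℝ) (K j : ℕ) : Continuous (softStep χ γ K j) := by
  unfold softStep
  split_ifs
  · fun_prop
  · fun_prop
  · exact continuous_sigmoid'.comp (by fun_prop)

section bins

variable {χ : ℕ → ℝ} {γ : ℝ} {K k : ℕ}

lemma sum_ell (hK : 2 ≤ K) (x : ℝ) : ∑ k ∈ Finset.Icc 1 K, ell χ γ K k x = 1 := by
  have h : ∀ n, n ≤ K → ∑ k ∈ Finset.Icc 1 n, ell χ γ K k x = 1 - softStep χ γ K n x := by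
    intro n
    induction n with
    | zero => intro _; simp [softStep]
    | succ n ih =>
      intro hn
      rw [Finset.sum_Icc_succ_top (by omega), ih (by omega),
        ell_eq_softStep hK (by omega) hn]
      simp
  rw [h K le_rfl]
  simp [softStep, show ¬ (K = 0) by omega]

lemma ell_nonneg (hK : 2 ≤ K) (hγ : 0 < γ) (hχ : ∀ k < K, χ k < χ (k + 1))
    (h1 : 1 ≤ k) (hk : k ≤ K) (x : ℝ) : 0 ≤ ell χ γ K k x := by
  rw [ell_eq_softStep hK h1 hk, sub_nonneg]
  have a1 := softStep_le_one χ γ K k x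
  have a2 := softStep_nonneg χ γ K (k - 1) x
  by_cases e1 : k - 1 = 0
  · simpa [softStep, e1] using a1
  · by_cases e2 : k = K
    · simpa [softStep, e2, show ¬ (K = 0) by omega] using a2
    · simp only [softStep, e1, e2, show ¬ (k - 1 = K) by omega, show ¬ (k = 0) by omega, if_false]
      apply sigmoid_mono
      have h := hχ (k - 1) (by omega)
      rw [Nat.sub_add_cancel h1] at h
      gcongr

lemma ell_le_one (hK : 2 ≤ K) (h1 : 1 ≤ k) (hk : k ≤ K) (x : ℝ) : ell χ γ K k x ≤ 1 := by
  rw [ell_eq_softStep hK h1 hk]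
  linarith [softStep_nonneg χ γ K k x, softStep_le_one χ γ K (k - 1) x]

lemma ell_le_exp_left (hK : 2 ≤ K) (h1 : 2 ≤ k) (hk : k ≤ K) (x : ℝ) :
    ell χ γ K k x ≤ Real.exp (-((χ (k - 1) - x) / γ)) := by
  rw [ell_eq_softStep hK (by omega) hk]
  have h2 : softStep χ γ K (k - 1) x ≤ Real.exp (-((χ (k - 1) - x) / γ)) := by
    simp only [softStep, show ¬ (k - 1 = 0) by omega, show ¬ (k - 1 = K) by omega, if_false]
    refine (sigmoid_le_exp _).trans (le_of_eq ?_)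
    congr 1
    ring
  linarith [softStep_nonneg χ γ K k x]

lemma ell_le_exp_right (hK : 2 ≤ K) (h1 : 1 ≤ k) (hk : k < K) (x : ℝ) :
    ell χ γ K k x ≤ Real.exp (-((x - χ k) / γ)) := by
  rw [ell_eq_softStep hK h1 hk.le]
  have h2 : 1 - softStep χ γ K k x ≤ Real.exp (-((x - χ k) / γ)) := by
    simp only [softStep, show ¬ (k = 0) by omega, show ¬ (k = K) by omega, if_false]
    rw [← sigmoid_neg_eq]
    exact sigmoid_le_exp _
  linarith [softStep_le_one χ γ K (k - 1) x]

/-- If the bin is at least `2γ` wide, then any of its points is at distance at least `γ` from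
one of the two endpoints, so `ℓ_k ≥ 1/2 + 2/3 - 1` on the whole bin. -/
lemma ell_lower (hK : 2 ≤ K) (hγ : 0 < γ) (h1 : 1 ≤ k) (hk : k ≤ K)
    (hw : 2 * γ ≤ χ k - χ (k - 1)) {x : ℝ} (hx1 : χ (k - 1) ≤ x) (hx2 : x ≤ χ k) :
    1 / 6 ≤ ell χ γ K k x := by
  rw [ell_eq_softStep hK h1 hk]
  have lo : ∀ c : ℝ, c ≤ 1 → c ≤ sigmoid ((x - χ (k - 1)) / γ) →
      c ≤ softStep χ γ K (k - 1) x := by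
    intro c hc hs
    unfold softStep
    simp only [show ¬ (k - 1 = K) by omega, if_false]
    split_ifs <;> assumption
  have hi : ∀ c : ℝ, c ≤ 1 → c ≤ sigmoid ((χ k - x) / γ) → c ≤ 1 - softStep χ γ K k x := by
    intro c hc hs
    unfold softStep
    simp only [show ¬ (k = 0) by omega, if_false]
    split_ifs
    · simpa using hc
    · rw [← sigmoid_neg_eq]
      convert hs using 2
      ring
  have lo1 := lo (1 / 2) (by norm_num) (half_le_sigmoid (div_nonneg (by linarith) hγ.le))
  have hi1 := hi (1 / 2) (by norm_num) (half_le_sigmoid (div_nonneg (by linarith) hγ.le))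
  rcases le_total (χ (k - 1) + γ) x with h | h
  · have := lo (2 / 3) (by norm_num)
      (two_thirds_le_sigmoid (by rw [le_div_iff₀ hγ]; linarith))
    linarith
  · have := hi (2 / 3) (by norm_num)
      (two_thirds_le_sigmoid (by rw [le_div_iff₀ hγ]; linarith))
    linarith

lemma continuous_ell (hK : 2 ≤ K) (h1 : 1 ≤ k) (hk : k ≤ K) : Continuous (ell χ γ K k) := by
  have : ell χ γ K k = fun x => softStep χ γ K (k - 1) x - softStep χ γ K k x :=
    funext (ell_eq_softStep hK h1 hk)
  rw [this]
  exact (continuous_softStep _ _ _ _).sub (continuous_softStep _ _ _ _)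

/-- The distance from `y` to the interval `[A, B]`, when `A ≤ B`. -/
noncomputable def gap (A B y : ℝ) : ℝ := max 0 (max (A - y) (y - B))

lemma abs_sub_le_gap (A B x y : ℝ) : |y - x| ≤ (B - A) + gap A B x + gap A B y := by
  unfold gap
  have h1 : A - x ≤ max 0 (max (A - x) (x - B)) := by simp
  have h2 : x - B ≤ max 0 (max (A - x) (x - B)) := by simp
  have h3 : A - y ≤ max 0 (max (A - y) (y - B)) := by simp
  have h4 : y - B ≤ max 0 (max (A - y) (y - B)) := by simp
  rw [abs_le]
  constructor <;> linarith

/-- From `w ≤ exp (-t/γ)` one gets `w t ≤ γ`, because `t ≤ exp t`. -/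
lemma mul_le_of_le_exp (hγ : 0 < γ) {w t : ℝ} (hw : 0 ≤ w)
    (h : w ≤ Real.exp (-(t / γ))) : w * t ≤ γ := by
  rcases le_total t 0 with ht | ht
  · exact (mul_nonpos_of_nonneg_of_nonpos hw ht).trans hγ.le
  · have h1 : t / γ ≤ Real.exp (t / γ) := by linarith [Real.add_one_le_exp (t / γ)]
    have h2 : w * (t / γ) ≤ Real.exp (-(t / γ)) * Real.exp (t / γ) :=
      mul_le_mul h h1 (by positivity) (Real.exp_nonneg _)
    rw [← Real.exp_add, neg_add_cancel, Real.exp_zero, ← mul_div_assoc,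
      div_le_one hγ] at h2
    exact h2

/-- The exponential tails of `ℓ_k` beat the distance to the `k`-th bin. The bin is clipped to
`[a, b]`, because the extreme breakpoints may lie outside and carry no step. -/
lemma ell_mul_gap_le (hK : 2 ≤ K) (hγ : 0 < γ) (hχ : ∀ k < K, χ k < χ (k + 1))
    (h1 : 1 ≤ k) (hk : k ≤ K) {a b y : ℝ} (h0 : χ 0 ≤ a) (hb : b ≤ χ K)
    (hy : y ∈ Set.Icc a b) :
    ell χ γ K k y * gap (max a (χ (k - 1))) (min b (χ k)) y ≤ γ := by
  have hn := ell_nonneg hK hγ hχ h1 hk y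
  have triv : ∀ t ≤ 0, ell χ γ K k y * t ≤ γ := fun t ht =>
    (mul_nonpos_of_nonneg_of_nonpos hn ht).trans hγ.le
  have hleft : ell χ γ K k y * (χ (k - 1) - y) ≤ γ := by
    rcases Nat.lt_or_ge k 2 with h | h
    · obtain rfl : k = 1 := by omega
      exact triv _ (by simpa using h0.trans hy.1)
    · exact mul_le_of_le_exp hγ hn (ell_le_exp_left hK h hk y)
  have hright : ell χ γ K k y * (y - χ k) ≤ γ := by
    rcases hk.lt_or_eq with h | h
    · exact mul_le_of_le_exp hγ hn (ell_le_exp_right hK h1 h y)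
    · subst h
      exact triv _ (by linarith [hy.2])
  unfold gap
  rcases max_choice 0 (max (max a (χ (k - 1)) - y) (y - min b (χ k))) with h | h <;> rw [h]
  · exact triv _ le_rfl
  · rcases max_choice (max a (χ (k - 1)) - y) (y - min b (χ k)) with h | h <;> rw [h]
    · rcases max_choice a (χ (k - 1)) with h | h <;> rw [h]
      · exact triv _ (by linarith [hy.1])
      · exact hleft
    · rcases min_choice b (χ k) with h | h <;> rw [h]
      · exact triv _ (by linarith [hy.2])
      · exact hright

end bins

/-! ### Weighted means and masses of bins -/

/-- The error of the `w`-weighted mean of `g` as a substitute for `g x`, when `w` has its mass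
within `[A, B]` up to tails of size `γ`. -/
lemma weighted_mean_error {μ : Measure ℝ} [IsProbabilityMeasure μ] {a b A B h γ L m : ℝ}
    {w g : ℝ → ℝ} (hae : ∀ᵐ y ∂μ, y ∈ Set.Icc a b) (hw : Integrable w μ)
    (hwg : Integrable (fun y => w y * g y) μ) (hw0 : ∀ y, 0 ≤ w y) (hL : 0 ≤ L)
    (hg : ∀ x ∈ Set.Icc a b, ∀ y ∈ Set.Icc a b, |g x - g y| ≤ L * |x - y|)
    (hγ : 0 ≤ γ) (hm : 0 < m) (hmw : m ≤ ∫ y, w y ∂μ) (hh : B - A ≤ h)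
    (hgap : ∀ y ∈ Set.Icc a b, w y * gap A B y ≤ γ) {x : ℝ} (hx : x ∈ Set.Icc a b) :
    w x * |g x - (∫ y, w y * g y ∂μ) / ∫ y, w y ∂μ| ≤
      L * (w x * h + γ + w x * (γ / m)) := by
  set W := ∫ y, w y ∂μ with hW
  have hWpos : 0 < W := hm.trans_le hmw
  have e1 : ∫ y, w y * (g x - g y) ∂μ = W * g x - ∫ y, w y * g y ∂μ := by
    simp_rw [mul_sub]
    rw [integral_sub (hw.mul_const _) hwg, integral_mul_const]
  have hb : |∫ y, w y * (g x - g y) ∂μ| ≤ L * (W * (h + gap A B x) + γ) := by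
    have e2 : ∫ y, L * (w y * (h + gap A B x) + γ) ∂μ = L * (W * (h + gap A B x) + γ) := by
      rw [integral_const_mul, integral_add (hw.mul_const _) (integrable_const _),
        integral_mul_const]
      simp [hW]
    rw [← e2, ← Real.norm_eq_abs]
    apply norm_integral_le_of_norm_le
      (((hw.mul_const _).add (integrable_const _)).const_mul _)
    filter_upwards [hae] with y hy
    rw [Real.norm_eq_abs, abs_mul, abs_of_nonneg (hw0 y)]
    have b1 := hg x hx y hy
    have b2 := abs_sub_le_gap A B x y
    rw [abs_sub_comm] at b2
    calc w y * |g x - g y| ≤ w y * (L * (h + gap A B x + gap A B y)) := by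
          refine mul_le_mul_of_nonneg_left (b1.trans ?_) (hw0 y)
          exact mul_le_mul_of_nonneg_left (by linarith) hL
      _ = L * (w y * (h + gap A B x) + w y * gap A B y) := by ring
      _ ≤ L * (w y * (h + gap A B x) + γ) := by
          have := hgap y hy
          gcongr
  have e3 : g x - (∫ y, w y * g y ∂μ) / W = (∫ y, w y * (g x - g y) ∂μ) / W := by
    rw [e1]; field_simp
  rw [e3, abs_div, abs_of_pos hWpos]
  have c1 : |∫ y, w y * (g x - g y) ∂μ| / W ≤ L * (h + gap A B x + γ / m) := by
    have : |∫ y, w y * (g x - g y) ∂μ| / W ≤ L * (h + gap A B x + γ / W) := by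
      rw [div_le_iff₀ hWpos]
      refine hb.trans (le_of_eq ?_)
      field_simp
    refine this.trans ?_
    gcongr
  calc _ ≤ w x * (L * (h + gap A B x + γ / m)) := mul_le_mul_of_nonneg_left c1 (hw0 x)
    _ = L * (w x * h + w x * gap A B x + w x * (γ / m)) := by ring
    _ ≤ _ := by
      have := hgap x hx
      gcongr

/-- A density between `pL` and `pU` makes the mass of a set comparable to its length. -/
lemma bin_mass_bounds {pL pU a b c d : ℝ} (hpL : 0 < pL) {dens : ℝ → ℝ}
    (hd : ∀ x ∈ Set.Icc a b, pL ≤ dens x ∧ dens x ≤ pU) (hcd : c ≤ d) {K : ℕ} (hK : 0 < K)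
    (hm : ((volume.restrict (Set.Icc a b)).withDensity (fun x => ENNReal.ofReal (dens x)))
      (Set.Ico c d) = (K : ENNReal)⁻¹) (hpU : 0 < pU) :
    min b d - max a c ≤ 1 / (pL * K) ∧ 1 / (pU * K) ≤ d - c := by
  rw [withDensity_apply _ measurableSet_Ico, Measure.restrict_restrict measurableSet_Ico] at hm
  have hS : MeasurableSet (Set.Ico c d ∩ Set.Icc a b) := measurableSet_Ico.inter measurableSet_Icc
  have hKr : (0 : ℝ) < K := by exact_mod_cast hK
  have eK : (K : ENNReal)⁻¹ = ENNReal.ofReal (1 / K) := by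
    rw [one_div, ENNReal.ofReal_inv_of_pos hKr, ENNReal.ofReal_natCast]
  constructor
  · have h1 : ENNReal.ofReal pL * volume (Set.Ico c d ∩ Set.Icc a b) ≤ (K : ENNReal)⁻¹ := by
      rw [← hm, ← setLIntegral_const]
      exact setLIntegral_mono' hS fun x hx => ENNReal.ofReal_le_ofReal (hd x hx.2).1
    have h2 : ENNReal.ofReal (min b d - max a c) ≤ volume (Set.Ico c d ∩ Set.Icc a b) := by
      rw [← Real.volume_Ico]
      apply measure_mono
      intro y hy
      simp only [Set.mem_Ico, max_le_iff, lt_min_iff] at hy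
      exact ⟨⟨hy.1.2, hy.2.2⟩, hy.1.1, hy.2.1.le⟩
    have h3 : ENNReal.ofReal (pL * (min b d - max a c)) ≤ ENNReal.ofReal (1 / K) := by
      rw [ENNReal.ofReal_mul hpL.le, ← eK]
      exact (mul_le_mul_right h2 _).trans h1
    rw [ENNReal.ofReal_le_ofReal_iff (by positivity)] at h3
    rw [le_div_iff₀ hKr] at h3
    rw [le_div_iff₀ (by positivity)]
    linarith
  · have h1 : (K : ENNReal)⁻¹ ≤ ENNReal.ofReal pU * volume (Set.Ico c d ∩ Set.Icc a b) := by
      rw [← hm, ← setLIntegral_const]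
      exact setLIntegral_mono' hS fun x hx => ENNReal.ofReal_le_ofReal (hd x hx.2).2
    have h2 : volume (Set.Ico c d ∩ Set.Icc a b) ≤ ENNReal.ofReal (d - c) := by
      rw [← Real.volume_Ico]
      exact measure_mono Set.inter_subset_left
    have h3 : ENNReal.ofReal (1 / K) ≤ ENNReal.ofReal (pU * (d - c)) := by
      rw [ENNReal.ofReal_mul hpU.le, ← eK]
      exact h1.trans (mul_le_mul_right h2 _)
    rw [ENNReal.ofReal_le_ofReal_iff (mul_nonneg hpU.le (by linarith))] at h3
    rw [div_le_iff₀ hKr] at h3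
    rw [div_le_iff₀ (by positivity)]
    linarith

/-- **Step 1 of the proof of Theorem 3.3 (univariate case).**
There are C > 0 and K₀, depending only on p_L, p_U and the length of X, such that
under the bin construction with K ≥ K₀ the bin approximant f_E of any L-Lipschitz g
satisfies sup_{x∈X} |g(x) − f_E(x)| ≤ C·L/K. -/
theorem bin_approximant_uniform_error
    (pL pU len : ℝ) (hpL : 0 < pL) (hpLU : pL ≤ pU) (hlen : 0 < len) :
    ∃ C : ℝ, 0 < C ∧ ∃ K₀ : ℕ,
      ∀ (a b : ℝ), a < b → b - a = len →
      ∀ (dens : ℝ → ℝ), Measurable dens →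
      (∀ x ∈ Set.Icc a b, pL ≤ dens x ∧ dens x ≤ pU) →
      ∀ (μ : Measure ℝ),
        μ = (volume.restrict (Set.Icc a b)).withDensity
          (fun x => ENNReal.ofReal (dens x)) →
        IsProbabilityMeasure μ →
      ∀ (K : ℕ), 2 ≤ K → K₀ ≤ K →
      ∀ (χ : ℕ → ℝ), (∀ k < K, χ k < χ (k + 1)) →
        Set.Icc a b ⊆ Set.Icc (χ 0) (χ K) →
        (∀ k, 1 ≤ k → k ≤ K →
          μ (Set.Ico (χ (k - 1)) (χ k)) = (K : ENNReal)⁻¹) →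
      ∀ (γ : ℝ), γ = 1 / (K : ℝ) ^ 3 →
      ∀ (L : ℝ), 0 ≤ L →
      ∀ (g : ℝ → ℝ), (∀ x ∈ Set.Icc a b, ∀ y ∈ Set.Icc a b,
        |g x - g y| ≤ L * |x - y|) →
      ∀ (δ : ℕ → ℝ), (∀ k, δ k
          = (∫ x, ell χ γ K k x * g x ∂μ) / ∫ x, ell χ γ K k x ∂μ) →
      ∀ x ∈ Set.Icc a b,
        |g x - ∑ k ∈ Finset.Icc 1 K, δ k * ell χ γ K k x| ≤ C * L / (K : ℝ) := by
  have hpU : 0 < pU := hpL.trans_le hpLU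
  refine ⟨1 / pL + 7, by positivity, ⌈2 * pU⌉₊, ?_⟩
  intro a b hab _ dens hdm hd μ hμ hprob K hK hK0 χ hχ hsub hmass γ hγ L hL g hg δ hδ x hx
  have hKr : (2 : ℝ) ≤ K := by exact_mod_cast hK
  have hKp : (0 : ℝ) < K := by linarith
  have hγp : 0 < γ := by rw [hγ]; positivity
  have hKU : 2 * pU ≤ K := (Nat.le_ceil _).trans (by exact_mod_cast hK0)
  have h0 : χ 0 ≤ a := (hsub (Set.left_mem_Icc.2 hab.le)).1
  have hbK : b ≤ χ K := (hsub (Set.right_mem_Icc.2 hab.le)).2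
  have hac : μ ≪ volume.restrict (Set.Icc a b) := hμ ▸ withDensity_absolutelyContinuous _ _
  have hae : ∀ᵐ y ∂μ, y ∈ Set.Icc a b := hac.ae_le (ae_restrict_mem measurableSet_Icc)
  have hgc : ContinuousOn g (Set.Icc a b) := by
    have : LipschitzOnWith (Real.toNNReal L) g (Set.Icc a b) :=
      LipschitzOnWith.of_dist_le_mul fun y hy z hz => by
        rw [Real.dist_eq, Real.dist_eq, Real.coe_toNNReal L hL]
        exact hg y hy z hz
    exact this.continuousOn
  have hgm : AEStronglyMeasurable g μ := (hgc.aestronglyMeasurable measurableSet_Icc).mono_ac hac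
  have hgi : Integrable g μ := by
    obtain ⟨M, hM⟩ := isCompact_Icc.exists_bound_of_continuousOn hgc
    exact Integrable.of_bound hgm M (hae.mono hM)
  have key : ∀ k ∈ Finset.Icc 1 K, ell χ γ K k x * |g x - δ k| ≤
      L * (ell χ γ K k x * (1 / (pL * K)) + γ + ell χ γ K k x * (γ / (1 / 6 * (1 / K)))) := by
    intro k hk
    obtain ⟨h1, hk⟩ := Finset.mem_Icc.1 hk
    have hlt : χ (k - 1) < χ k := by
      simpa [Nat.sub_add_cancel h1] using hχ (k - 1) (by omega)
    have hmk := hmass k h1 hk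
    obtain ⟨hw1, hw2⟩ := bin_mass_bounds hpL hd hlt.le (by omega : 0 < K) (hμ ▸ hmk) hpU
    -- `2 γ = 2 / K³ ≤ 1 / (pU K)` because `2 pU ≤ K ≤ K²`
    have hwide : 2 * γ ≤ χ k - χ (k - 1) := by
      refine le_trans ?_ hw2
      rw [hγ, mul_one_div, div_le_div_iff₀ (by positivity) (by positivity)]
      nlinarith [mul_le_mul_of_nonneg_right hKU hKp.le, pow_pos hKp 2]
    have hn := fun y => ell_nonneg hK hγp hχ h1 hk y
    have hnorm : ∀ᵐ y ∂μ, ‖ell χ γ K k y‖ ≤ 1 := .of_forall fun y => by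
      rw [Real.norm_eq_abs, abs_of_nonneg (hn y)]
      exact ell_le_one hK h1 hk y
    have hmeas : AEStronglyMeasurable (ell χ γ K k) μ :=
      (continuous_ell hK h1 hk).aestronglyMeasurable
    have hint : Integrable (ell χ γ K k) μ := Integrable.of_bound hmeas 1 hnorm
    have hlow : 1 / 6 * (1 / (K : ℝ)) ≤ ∫ y, ell χ γ K k y ∂μ := by
      have e : μ.real (Set.Ico (χ (k - 1)) (χ k)) = 1 / K := by
        simp [measureReal_def, hmk]
      rw [← e]
      refine le_trans ?_ (setIntegral_le_integral (s := Set.Ico (χ (k - 1)) (χ k)) hint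
        (.of_forall hn))
      exact setIntegral_ge_of_const_le_real measurableSet_Ico (measure_ne_top _ _)
        (fun y hy => ell_lower hK hγp h1 hk hwide hy.1 hy.2.le) hint.integrableOn
    rw [hδ k]
    exact weighted_mean_error hae hint (hgi.bdd_mul hmeas hnorm) hn hL hg hγp.le
      (by positivity) hlow hw1 (fun y hy => ell_mul_gap_le hK hγp hχ h1 hk h0 hbK hy) hx
  have hsum := sum_ell (χ := χ) (γ := γ) hK x
  have e1 : g x - ∑ k ∈ Finset.Icc 1 K, δ k * ell χ γ K k x =
      ∑ k ∈ Finset.Icc 1 K, ell χ γ K k x * (g x - δ k) := by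
    simp_rw [mul_sub]
    rw [Finset.sum_sub_distrib, ← Finset.sum_mul, hsum, one_mul]
    simp_rw [mul_comm]
  rw [e1]
  calc _ ≤ ∑ k ∈ Finset.Icc 1 K, |ell χ γ K k x * (g x - δ k)| :=
        Finset.abs_sum_le_sum_abs _ _
    _ = ∑ k ∈ Finset.Icc 1 K, ell χ γ K k x * |g x - δ k| := by
        refine Finset.sum_congr rfl fun k hk => ?_
        obtain ⟨h1, hk⟩ := Finset.mem_Icc.1 hk
        rw [abs_mul, abs_of_nonneg (ell_nonneg hK hγp hχ h1 hk x)]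
    _ ≤ _ := Finset.sum_le_sum key
    -- `∑ ℓ_k(x) = 1`, so only the middle term `γ` is counted `K` times
    _ = L * (1 / (pL * K) + K * γ + γ / (1 / 6 * (1 / K))) := by
        rw [← Finset.mul_sum, Finset.sum_add_distrib, Finset.sum_add_distrib,
          ← Finset.sum_mul, ← Finset.sum_mul, hsum]
        simp
    _ = L * (1 / (pL * K) + 7 / (K : ℝ) ^ 2) := by
        rw [hγ]
        field_simp
        ring
    _ ≤ L * (1 / (pL * K) + 7 / K) := by
        gcongr
        exact le_self_pow₀ (by linarith) (by norm_num)
    _ = _ := by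
        field_simp
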